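/- arXiv:2308.09429 — 2 statements merged into one kernel-verified Lean document; each statement's English description precedes it below -/
import Mathlib

section
/- Let A be an n×n matrix over 𝔽₂, let p, r, t ∈ 𝔽₂ⁿ and s, u, ℓ ∈ 𝔽₂ with s + u = 1, and let A' be the (n+2)×(n+2) block matrix A' = [[A, p, r], [pᵀ, 0, s], [tᵀ, u, ℓ]] (the (n+1)-st column and row both given by p with diagonal entry 0, the (n+2)-nd column given by r and row by t with diagonal entry ℓ, and corner entries s and u with s + u = 1). Then S(A') = 2·S(A). -/
open Matrix

/-- The Gauss sum `S(A) = Σ_{x ∈ 𝔽₂ⁿ} (-1)^{xᵀAx}` of a square matrix over `𝔽₂`. -/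
def matGaussSum {ι : Type*} [Fintype ι] [DecidableEq ι] (A : Matrix ι ι (ZMod 2)) : ℤ :=
  ∑ x : ι → ZMod 2, if x ⬝ᵥ A.mulVec x = 0 then 1 else -1

/-!
Write a vector of the enlarged space as `(x, y, z)` with `y, z ∈ 𝔽₂`. The two copies of `p`
cancel in characteristic two, and `s + u = 1` makes the coefficient of `yz` equal to one, so the
enlarged form is `q_A(x) + yz + z(xᵀr + tᵀx + ℓz)`. It is affine in `y` with slope `z`; by
orthogonality of characters the sum over `y` therefore vanishes unless `z = 0`, where it contributes
`2 (-1)^{q_A(x)}`.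
-/

section General

variable {ι κ R : Type*} [Fintype ι]

lemma sum_sum_addChar_mul_add {R' : Type*} [CommRing R] [Fintype R] [CommRing R'] [IsDomain R']
    {ψ : AddChar R R'} (hψ : ψ.IsPrimitive) (f : R → R) :
    ∑ y, ∑ z, ψ (y * z + f z) = Fintype.card R * ψ (f 0) := by
  classical
  calc ∑ y, ∑ z, ψ (y * z + f z)
      = ∑ z, (∑ y, ψ (y * z)) * ψ (f z) := by
        rw [Finset.sum_comm]
        simp only [AddChar.map_add_eq_mul, Finset.sum_mul]
    _ = Fintype.card R * ψ (f 0) := by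
        simp [AddChar.sum_mulShift _ hψ]

lemma sumElim_dotProduct_fromBlocks_mulVec [Fintype κ] [NonUnitalNonAssocSemiring R]
    (A : Matrix ι ι R) (B : Matrix ι κ R) (C : Matrix κ ι R) (D : Matrix κ κ R)
    (x : ι → R) (w : κ → R) :
    Sum.elim x w ⬝ᵥ fromBlocks A B C D *ᵥ Sum.elim x w =
      x ⬝ᵥ A *ᵥ x + x ⬝ᵥ B *ᵥ w + (w ⬝ᵥ C *ᵥ x + w ⬝ᵥ D *ᵥ w) := by
  simp only [fromBlocks_mulVec, sumElim_dotProduct_sumElim, dotProduct_add, Sum.elim_comp_inl,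
    Sum.elim_comp_inr]

lemma dotProduct_twoColumns_mulVec [CommSemiring R] (x p r : ι → R) (y z : R) :
    x ⬝ᵥ (of fun i (k : Fin 2) => ![p i, r i] k) *ᵥ ![y, z] = y * (x ⬝ᵥ p) + z * (x ⬝ᵥ r) := by
  have columns : (of fun i (k : Fin 2) => ![p i, r i] k) *ᵥ ![y, z] = y • p + z • r := by
    ext i
    simp [mulVec, mul_comm]
  rw [columns, dotProduct_add, dotProduct_smul, dotProduct_smul, smul_eq_mul, smul_eq_mul]

lemma dotProduct_twoRows_mulVec [NonUnitalNonAssocSemiring R] (x q t : ι → R) (y z : R) :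
    ![y, z] ⬝ᵥ (of fun (k : Fin 2) i => ![q i, t i] k) *ᵥ x = y * (q ⬝ᵥ x) + z * (t ⬝ᵥ x) :=
  vec2_dotProduct _ _

lemma sumElim_dotProduct_border_mulVec [CommSemiring R] (A : Matrix ι ι R)
    (p r q t : ι → R) (d s u l : R) (x : ι → R) (y z : R) :
    Sum.elim x ![y, z] ⬝ᵥ
        fromBlocks A (of fun i (k : Fin 2) => ![p i, r i] k)
          (of fun (k : Fin 2) i => ![q i, t i] k) !![d, s; u, l] *ᵥ Sum.elim x ![y, z] =
      x ⬝ᵥ A *ᵥ x + y * (x ⬝ᵥ p + q ⬝ᵥ x + d * y) + (s + u) * (y * z) +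
        z * (x ⬝ᵥ r + t ⬝ᵥ x + l * z) := by
  have corner : ![y, z] ⬝ᵥ !![d, s; u, l] *ᵥ ![y, z] =
      y * (d * y + s * z) + z * (u * y + l * z) := by
    simp [mulVec, dotProduct, Fin.sum_univ_two]
  rw [sumElim_dotProduct_fromBlocks_mulVec, dotProduct_twoColumns_mulVec,
    dotProduct_twoRows_mulVec, corner]
  ring

lemma sumElim_dotProduct_border_mulVec_of_charTwo [CommRing R] [CharP R 2]
    (A : Matrix ι ι R) (p r t : ι → R) {s u : R} (l : R) (hsu : s + u = 1)
    (x : ι → R) (y z : R) :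
    Sum.elim x ![y, z] ⬝ᵥ
        fromBlocks A (of fun i (k : Fin 2) => ![p i, r i] k)
          (of fun (k : Fin 2) i => ![p i, t i] k) !![0, s; u, l] *ᵥ Sum.elim x ![y, z] =
      y * z + (x ⬝ᵥ A *ᵥ x + z * (x ⬝ᵥ r + t ⬝ᵥ x + l * z)) := by
  have p_cancels : x ⬝ᵥ p + p ⬝ᵥ x = 0 := by
    rw [dotProduct_comm p x, CharTwo.add_self_eq_zero]
  rw [sumElim_dotProduct_border_mulVec, p_cancels, hsu]
  ring

lemma sum_sumElim_vec2 {M : Type*} [DecidableEq ι] [Fintype R] [AddCommMonoid M]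
    (f : (ι ⊕ Fin 2 → R) → M) :
    ∑ v, f v = ∑ x : ι → R, ∑ y, ∑ z, f (Sum.elim x ![y, z]) := by
  rw [← (Equiv.sumArrowEquivProdArrow ι (Fin 2) R).symm.sum_comp, Fintype.sum_prod_type]
  refine Finset.sum_congr rfl fun x _ => ?_
  rw [← (finTwoArrowEquiv R).symm.sum_comp, Fintype.sum_prod_type]
  rfl

end General

/-- The nontrivial additive character `a ↦ (-1)^a` of `𝔽₂`, with values in `ℤ`; the Gauss sum
is the sum of its values on the quadratic form. -/
def signChar : AddChar (ZMod 2) ℤ :=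
  AddChar.zmodChar 2 neg_one_sq

lemma signChar_apply (a : ZMod 2) : signChar a = if a = 0 then 1 else -1 := by
  decide +revert

lemma isPrimitive_signChar : signChar.IsPrimitive :=
  AddChar.zmodChar_primitive_of_primitive_root 2 (IsPrimitiveRoot.neg_one 0 two_ne_zero.symm)

section GaussSum

variable {ι : Type*} [Fintype ι] [DecidableEq ι]

lemma matGaussSum_eq_sum_signChar (A : Matrix ι ι (ZMod 2)) :
    matGaussSum A = ∑ x, signChar (x ⬝ᵥ A *ᵥ x) := by
  simp only [matGaussSum, signChar_apply]

theorem stmt13_general (A : Matrix ι ι (ZMod 2)) (p r t : ι → ZMod 2) (s u l : ZMod 2)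
    (hsu : s + u = 1) :
    matGaussSum
      (fromBlocks A
        (of fun i (k : Fin 2) => ![p i, r i] k)
        (of fun (k : Fin 2) i => ![p i, t i] k)
        !![0, s; u, l])
      = 2 * matGaussSum A := by
  simp only [matGaussSum_eq_sum_signChar, sum_sumElim_vec2,
    sumElim_dotProduct_border_mulVec_of_charTwo A p r t l hsu, Finset.mul_sum]
  refine Finset.sum_congr rfl fun x _ => ?_
  rw [sum_sum_addChar_mul_add isPrimitive_signChar
    (fun z => x ⬝ᵥ A *ᵥ x + z * (x ⬝ᵥ r + t ⬝ᵥ x + l * z))]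
  simp

end GaussSum

/-- Enlarging `A` to the block matrix `[[A, p, r], [pᵀ, 0, s], [tᵀ, u, ℓ]]` with `s + u = 1`
doubles the Gauss sum. -/
theorem stmt13 {n : ℕ} (A : Matrix (Fin n) (Fin n) (ZMod 2))
    (p r t : Fin n → ZMod 2) (s u l : ZMod 2) (hsu : s + u = 1) :
    matGaussSum
      (Matrix.fromBlocks A
        (Matrix.of fun i (k : Fin 2) => ![p i, r i] k)
        (Matrix.of fun (k : Fin 2) i => ![p i, t i] k)
        !![0, s; u, l])
      = 2 * matGaussSum A :=
  stmt13_general A p r t s u l hsu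
end

section
/- Let m, n ∈ ℕ, let i, j ∈ {1, …, m} be indices, let ξ : Bool × Bool → 𝔽₂ⁿ be any map, let ℓ : Bool × Bool → 𝔽₂ satisfy ℓ(a,b) = ℓ(¬a,¬b) for all a, b, and let A(ε) be a family of n×n matrices over 𝔽₂ indexed by sign vectors ε ∈ Bool^m. Define the family of (n+1)×(n+1) matrices A'(ε) = [[A(ε), ξ(ε_i, ε_j)], [ξ(¬ε_i, ¬ε_j)ᵀ, ℓ(ε_i, ε_j)]]. If E ⊆ Bool^m is a finite set of even cardinality such that #{ε ∈ E : ε_i = true and ε_j = true} and #{ε ∈ E : ε_i = false and ε_j = false} have the same parity, then S^E(A') = 2·S^E(A). (This is the effect of adding a clasp to a C-complex, realizing a crossing change between components of colors i and j.) -/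
open Matrix

/-- The Gauss sum `S^E(A)` of the sum `A^E = Σ_{ε ∈ E} A(ε)` of a family of matrices over
`𝔽₂` indexed by sign vectors. -/
def famGaussSum {m : ℕ} {ι : Type*} [Fintype ι] [DecidableEq ι]
    (E : Finset (Fin m → Bool)) (A : (Fin m → Bool) → Matrix ι ι (ZMod 2)) : ℤ :=
  matGaussSum (∑ ε ∈ E, A ε)

/-!
The hypotheses on `E` say that the numbers of `ε ∈ E` with `ε i = ε j` and with
`ε i ≠ ε j` are both even. A function of `(ε i, ε j)` invariant under simultaneous negation depends
only on whether the two signs agree, so its sum over `E` vanishes. Applied to `ξ(a,b) + ξ(¬a,¬b)`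
and to `ℓ`, this shows that the summed matrix is `[[A, B], [Bᵀ, 0]]`. The two off-diagonal terms
of its quadratic form cancel modulo 2, so its Gauss sum factors as `S(A) * S(0)`.
-/

section SignPairs

variable {α M : Type*} {s : Finset α} {a b : α → Bool}

theorem even_card_filter_eq
    (hpar : (s.filter fun k => a k = true ∧ b k = true).card ≡
      (s.filter fun k => a k = false ∧ b k = false).card [MOD 2]) :
    Even (s.filter fun k => a k = b k).card := by
  have hsplit : (s.filter fun k => a k = b k).card =
      (s.filter fun k => a k = true ∧ b k = true).card +
        (s.filter fun k => a k = false ∧ b k = false).card := by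
    simp only [Finset.card_filter, ← Finset.sum_add_distrib]
    refine Finset.sum_congr rfl fun k _ => ?_
    cases a k <;> cases b k <;> rfl
  rw [hsplit, Nat.even_add, Nat.even_iff, Nat.even_iff, hpar]

theorem even_card_filter_ne (hs : Even s.card)
    (hpar : (s.filter fun k => a k = true ∧ b k = true).card ≡
      (s.filter fun k => a k = false ∧ b k = false).card [MOD 2]) :
    Even (s.filter fun k => ¬a k = b k).card := by
  rw [← Finset.card_filter_add_card_filter_not (s := s) (fun k => a k = b k), Nat.even_add] at hs
  exact hs.1 (even_card_filter_eq hpar)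

variable [AddCommGroup M] [Module (ZMod 2) M]

theorem even_nsmul_eq_zero {n : ℕ} (hn : Even n) (x : M) : n • x = 0 := by
  rw [← Nat.cast_smul_eq_nsmul (ZMod 2), ZMod.natCast_eq_zero_iff_even.2 hn, zero_smul]

theorem sum_eq_zero_of_forall_eq_not_not (hs : Even s.card)
    (hpar : (s.filter fun k => a k = true ∧ b k = true).card ≡
      (s.filter fun k => a k = false ∧ b k = false).card [MOD 2])
    {g : Bool → Bool → M} (hg : ∀ x y, g x y = g (!x) (!y)) :
    ∑ k ∈ s, g (a k) (b k) = 0 := by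
  have g_eq_ite (x y : Bool) : g x y = if x = y then g true true else g true false := by
    cases x <;> cases y <;> simp [hg false]
  rw [Finset.sum_congr rfl fun k _ => g_eq_ite (a k) (b k), Finset.sum_ite, Finset.sum_const,
    Finset.sum_const, even_nsmul_eq_zero (even_card_filter_eq hpar),
    even_nsmul_eq_zero (even_card_filter_ne hs hpar), add_zero]

theorem sum_not_not_eq_sum (hs : Even s.card)
    (hpar : (s.filter fun k => a k = true ∧ b k = true).card ≡
      (s.filter fun k => a k = false ∧ b k = false).card [MOD 2])
    (g : Bool → Bool → M) :
    ∑ k ∈ s, g (!(a k)) (!(b k)) = ∑ k ∈ s, g (a k) (b k) := by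
  have hsum : ∑ k ∈ s, (g (!(a k)) (!(b k)) + g (a k) (b k)) = 0 :=
    sum_eq_zero_of_forall_eq_not_not hs hpar (g := fun x y => g (!x) (!y) + g x y) fun x y => by
      simp only [Bool.not_not, add_comm]
  rwa [Finset.sum_add_distrib, ← ZModModule.sub_eq_add, sub_eq_zero] at hsum

end SignPairs

section BlockMatrices

variable {ι κ : Type*}

theorem sum_fromBlocks {α l m n o R : Type*} [AddCommMonoid R] (s : Finset α)
    (A : α → Matrix n l R) (B : α → Matrix n m R) (C : α → Matrix o l R) (D : α → Matrix o m R) :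
    ∑ k ∈ s, fromBlocks (A k) (B k) (C k) (D k) =
      fromBlocks (∑ k ∈ s, A k) (∑ k ∈ s, B k) (∑ k ∈ s, C k) (∑ k ∈ s, D k) := by
  ext (i | i) (j | j) <;> simp [Matrix.sum_apply]

variable [Fintype ι] [Fintype κ]

theorem sumElim_dotProduct_fromBlocks_transpose_mulVec {R : Type*} [CommRing R] [CharP R 2]
    (A : Matrix ι ι R) (B : Matrix ι κ R) (D : Matrix κ κ R) (x : ι → R) (y : κ → R) :
    Sum.elim x y ⬝ᵥ fromBlocks A B Bᵀ D *ᵥ Sum.elim x y = x ⬝ᵥ A *ᵥ x + y ⬝ᵥ D *ᵥ y := by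
  rw [fromBlocks_mulVec, sumElim_dotProduct_sumElim]
  simp only [Sum.elim_comp_inl, Sum.elim_comp_inr, dotProduct_add]
  rw [dotProduct_transpose_mulVec, add_assoc, CharTwo.add_cancel_left]

variable [DecidableEq ι] [DecidableEq κ]

theorem matGaussSum_zero : matGaussSum (0 : Matrix ι ι (ZMod 2)) = 2 ^ Fintype.card ι := by
  simp [matGaussSum]

theorem matGaussSum_fromBlocks_transpose (A : Matrix ι ι (ZMod 2)) (B : Matrix ι κ (ZMod 2))
    (D : Matrix κ κ (ZMod 2)) :
    matGaussSum (fromBlocks A B Bᵀ D) = matGaussSum A * matGaussSum D := by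
  have sign_add : ∀ p q : ZMod 2, (if p + q = 0 then (1 : ℤ) else -1) =
      (if p = 0 then 1 else -1) * (if q = 0 then 1 else -1) := by decide
  simp only [matGaussSum]
  rw [Fintype.sum_mul_sum, ← Fintype.sum_prod_type',
    ← (Equiv.sumArrowEquivProdArrow ι κ (ZMod 2)).symm.sum_comp]
  refine Fintype.sum_congr _ _ fun ⟨x, y⟩ => ?_
  rw [← sign_add, ← sumElim_dotProduct_fromBlocks_transpose_mulVec A B D x y]
  rfl

end BlockMatrices

theorem stmt17_general {α ι κ : Type*} [Fintype ι] [DecidableEq ι] [Fintype κ] [DecidableEq κ]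
    (s : Finset α) (a b : α → Bool) (hs : Even s.card)
    (hpar : (s.filter fun k => a k = true ∧ b k = true).card ≡
      (s.filter fun k => a k = false ∧ b k = false).card [MOD 2])
    (ξ : Bool → Bool → Matrix ι κ (ZMod 2))
    (l : Bool → Bool → Matrix κ κ (ZMod 2)) (hl : ∀ x y, l x y = l (!x) (!y))
    (A : α → Matrix ι ι (ZMod 2)) :
    matGaussSum (∑ k ∈ s,
      fromBlocks (A k) (ξ (a k) (b k)) (ξ (!(a k)) (!(b k)))ᵀ (l (a k) (b k))) =
      2 ^ Fintype.card κ * matGaussSum (∑ k ∈ s, A k) := by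
  rw [sum_fromBlocks, ← transpose_sum, sum_not_not_eq_sum hs hpar ξ,
    sum_eq_zero_of_forall_eq_not_not hs hpar hl, matGaussSum_fromBlocks_transpose, matGaussSum_zero,
    mul_comm]

/-- Effect of adding a clasp to a C-complex on generalized Seifert matrices: passing from
`A(ε)` to `A'(ε) = [[A(ε), ξ(ε_i, ε_j)], [ξ(¬ε_i, ¬ε_j)ᵀ, ℓ(ε_i, ε_j)]]` (with
`ℓ(a,b) = ℓ(¬a,¬b)`) doubles the Gauss sum `S^E`, provided `E` has even cardinality and
`#{ε ∈ E : ε_i = ε_j = true}` and `#{ε ∈ E : ε_i = ε_j = false}` have the same parity. -/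
theorem stmt17 (m n : ℕ) (i j : Fin m)
    (ξ : Bool → Bool → Fin n → ZMod 2)
    (l : Bool → Bool → ZMod 2) (hl : ∀ a b, l a b = l (!a) (!b))
    (A : (Fin m → Bool) → Matrix (Fin n) (Fin n) (ZMod 2))
    (E : Finset (Fin m → Bool)) (hE : Even E.card)
    (hpar : (E.filter (fun ε => ε i = true ∧ ε j = true)).card % 2
          = (E.filter (fun ε => ε i = false ∧ ε j = false)).card % 2) :
    famGaussSum E (fun ε =>
      Matrix.fromBlocks (A ε)
        (Matrix.of fun x (_ : Unit) => ξ (ε i) (ε j) x)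
        (Matrix.of fun (_ : Unit) x => ξ (!(ε i)) (!(ε j)) x)
        (Matrix.of fun (_ : Unit) (_ : Unit) => l (ε i) (ε j)))
      = 2 * famGaussSum E A := by
  exact stmt17_general E (· i) (· j) hE hpar (fun a b => of fun x (_ : Unit) => ξ a b x)
    (fun a b => of fun _ _ => l a b) (fun a b => by rw [hl a b]) A
end
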